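/- arXiv:1404.0784 — 13 statements merged into one kernel-verified Lean document; each statement's English description precedes it below -/
import Mathlib

section
/- For any type U, any k : ℕ, any k-ary term function with constants f on U, any assignment x : Fin k → Set U, and any σ : Fin k → Bool, one has f(x) ∩ C_σ(x) = f(σ*) ∩ C_σ(x). -/
/-- The constituent `C_σ(x)`. -/
def constituent {U : Type*} {k : ℕ} (x : Fin k → Set U) (σ : Fin k → Bool) : Set U :=
  ⋂ i, if σ i = true then x i else (x i)ᶜ

/-- The 0-1 assignment `σ*` associated to a Boolean tuple `σ`. -/
def starAssign {U : Type*} {k : ℕ} (σ : Fin k → Bool) : Fin k → Set U :=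
  fun i => if σ i = true then Set.univ else ∅

/-- `k`-ary term functions with constants on `U`. -/
inductive IsTermFun (U : Type*) (k : ℕ) : ((Fin k → Set U) → Set U) → Prop
  | proj (i : Fin k) : IsTermFun U k (fun x => x i)
  | const (A : Set U) : IsTermFun U k (fun _ => A)
  | union {f g} : IsTermFun U k f → IsTermFun U k g → IsTermFun U k (fun x => f x ∪ g x)
  | inter {f g} : IsTermFun U k f → IsTermFun U k g → IsTermFun U k (fun x => f x ∩ g x)
  | compl {f} : IsTermFun U k f → IsTermFun U k (fun x => (f x)ᶜ)

theorem termFun_inter_constituent (U : Type*) (k : ℕ)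
    (f : (Fin k → Set U) → Set U) (hf : IsTermFun U k f)
    (x : Fin k → Set U) (σ : Fin k → Bool) :
    f x ∩ constituent x σ = f (starAssign σ) ∩ constituent x σ := by
  have key : ∀ u ∈ constituent x σ, (u ∈ f x ↔ u ∈ f (starAssign σ)) := by
    intro u hu
    induction hf with
    | proj i =>
      have h := Set.mem_iInter.mp hu i
      by_cases hs : σ i = true
      · simp only [hs, if_true] at h
        simp [starAssign, hs, h]
      · rw [if_neg hs] at h
        simp only [starAssign, if_neg hs]
        exact ⟨fun h' => absurd h' h, fun h' => absurd h' (Set.notMem_empty u)⟩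
    | const A => exact Iff.rfl
    | union _ _ h1 h2 => exact or_congr h1 h2
    | inter _ _ h1 h2 => exact and_congr h1 h2
    | compl _ h1 => exact not_congr h1
  ext u
  exact and_congr_left (key u)
end

section
/- (Disjunctive normal form) For any type U, any k : ℕ, any k-ary 0-1 term function f on U, and any assignment x : Fin k → Set U, f(x) equals the union of the constituents C_σ(x) taken over all σ : Fin k → Bool such that f(σ*) ≠ ∅. -/
/-- `k`-ary 0-1 term functions on `U` (only constants `∅` and `univ` allowed). -/
inductive IsTermFun01 (U : Type*) (k : ℕ) : ((Fin k → Set U) → Set U) → Prop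
  | proj (i : Fin k) : IsTermFun01 U k (fun x => x i)
  | empty : IsTermFun01 U k (fun _ => ∅)
  | univ : IsTermFun01 U k (fun _ => Set.univ)
  | union {f g} : IsTermFun01 U k f → IsTermFun01 U k g → IsTermFun01 U k (fun x => f x ∪ g x)
  | inter {f g} : IsTermFun01 U k f → IsTermFun01 U k g → IsTermFun01 U k (fun x => f x ∩ g x)
  | compl {f} : IsTermFun01 U k f → IsTermFun01 U k (fun x => (f x)ᶜ)

theorem termFun_local {U : Type*} {k : ℕ} {f : (Fin k → Set U) → Set U}
    (hf : IsTermFun01 U k f) (y z : Fin k → Set U) (u v : U)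
    (h : ∀ i, u ∈ y i ↔ v ∈ z i) : u ∈ f y ↔ v ∈ f z := by
  induction hf with
  | proj i => exact h i
  | empty => simp
  | univ => simp
  | union _ _ h1 h2 => simp only [Set.mem_union, h1, h2]
  | inter _ _ h1 h2 => simp only [Set.mem_inter_iff, h1, h2]
  | compl _ h1 => simp only [Set.mem_compl_iff, h1]

theorem mem_constituent_iff {U : Type*} {k : ℕ} (x : Fin k → Set U) (σ : Fin k → Bool) (u : U) :
    u ∈ constituent x σ ↔ ∀ i, u ∈ x i ↔ σ i = true := by
  unfold constituent
  rw [Set.mem_iInter]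
  refine forall_congr' fun i => ?_
  cases σ i <;> simp

theorem mem_starAssign_iff {U : Type*} {k : ℕ} (σ : Fin k → Bool) (v : U) (i : Fin k) :
    v ∈ (starAssign σ : Fin k → Set U) i ↔ σ i = true := by
  unfold starAssign
  cases σ i <;> simp

theorem disjunctive_normal_form (U : Type*) (k : ℕ)
    (f : (Fin k → Set U) → Set U) (hf : IsTermFun01 U k f) (x : Fin k → Set U) :
    f x = ⋃ σ ∈ {σ : Fin k → Bool | f (starAssign σ) ≠ ∅}, constituent x σ := by
  classical
  ext u
  simp only [Set.mem_iUnion, Set.mem_setOf_eq, exists_prop, mem_constituent_iff]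
  constructor
  · intro hu
    refine ⟨fun i => decide (u ∈ x i), ?_, fun i => by simp⟩
    refine Set.nonempty_iff_ne_empty.mp ⟨u, ?_⟩
    exact (termFun_local hf x _ u u fun i => by rw [mem_starAssign_iff]; simp).mp hu
  · rintro ⟨σ, hne, hσ⟩
    obtain ⟨v, hv⟩ := Set.nonempty_iff_ne_empty.mpr hne
    exact (termFun_local hf x _ u v fun i => by rw [mem_starAssign_iff]; exact hσ i).mpr hv
end

section
/- For any k : ℕ and any S, T : Set (Fin k → Bool), the following are equivalent: (i) for every nonempty type U and every assignment x : Fin k → Set U, P_S(x) = P_T(x); (ii) S = T. That is, two terms define the same set function over all nonempty power-set algebras if and only if they have the same set of constituents. -/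
/-- The term function associated to a set `S` of constituent indices:
`P_S(x) = ⋃ σ ∈ S, C_σ(x)`. -/
def PSfun {U : Type*} {k : ℕ} (S : Set (Fin k → Bool)) (x : Fin k → Set U) : Set U :=
  ⋃ σ ∈ S, constituent x σ

theorem same_function_iff_same_constituents (k : ℕ) (S T : Set (Fin k → Bool)) :
    (∀ (U : Type), Nonempty U → ∀ x : Fin k → Set U, PSfun S x = PSfun T x) ↔ S = T := by
  constructor
  · intro h
    have key : ∀ R : Set (Fin k → Bool),
        PSfun R (fun i => {τ : Fin k → Bool | τ i = true}) = R := by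
      intro R
      have hc : ∀ σ : Fin k → Bool,
          constituent (fun i => {τ : Fin k → Bool | τ i = true}) σ = {σ} := by
        intro σ
        ext τ
        simp only [constituent, Set.mem_iInter, Set.mem_singleton_iff]
        constructor
        · intro hτ
          funext i
          have hi := hτ i
          cases hs : σ i <;> simpa [hs] using hi
        · rintro rfl i
          cases hs : τ i <;> simp [hs]
      simp [PSfun, hc]
    have := h (Fin k → Bool) ⟨fun _ => true⟩ (fun i => {τ | τ i = true})
    rwa [key S, key T] at this
  · rintro rfl U _ x
    rfl
end

section
/- (Equational Arguments) For any k, m : ℕ, any S : Fin m → Set (Fin k → Bool), and any T : Set (Fin k → Bool), the equational argument with premises P_{S i}(x) = ∅ for all i and conclusion P_T(x) = ∅ is PSA-valid (i.e., for every nonempty type U and every assignment x : Fin k → Set U, if P_{S i}(x) = ∅ for all i then P_T(x) = ∅) if and only if T ⊆ ⋃ i, S i. -/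
theorem mem_constituent_unit {k : ℕ} (τ σ : Fin k → Bool) (u : Unit) :
    u ∈ constituent (fun i => {_u : Unit | τ i = true}) σ ↔ σ = τ := by
  unfold constituent
  rw [Set.mem_iInter, funext_iff]
  refine forall_congr' fun i => ?_
  cases hs : σ i <;> cases ht : τ i <;> simp [ht]

theorem equational_arguments (k m : ℕ) (S : Fin m → Set (Fin k → Bool))
    (T : Set (Fin k → Bool)) :
    (∀ (U : Type), Nonempty U → ∀ x : Fin k → Set U,
      (∀ i, PSfun (S i) x = ∅) → PSfun T x = ∅) ↔ T ⊆ ⋃ i, S i := by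
  constructor
  · intro h τ hτ
    by_contra hn
    have h1 := h Unit ⟨()⟩ (fun i => {_u : Unit | τ i = true}) (by
      intro i
      rw [Set.eq_empty_iff_forall_notMem]
      intro u hu
      unfold PSfun at hu
      obtain ⟨σ, hσ, hc⟩ := Set.mem_iUnion₂.1 hu
      rw [mem_constituent_unit] at hc
      subst hc
      exact hn (Set.mem_iUnion.2 ⟨i, hσ⟩))
    rw [Set.eq_empty_iff_forall_notMem] at h1
    exact h1 () (Set.mem_iUnion₂.2 ⟨τ, hτ, (mem_constituent_unit τ τ ()).2 rfl⟩)
  · intro h U _ x hx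
    rw [Set.eq_empty_iff_forall_notMem]
    intro u hu
    obtain ⟨σ, hσ, hc⟩ := Set.mem_iUnion₂.1 hu
    obtain ⟨i, hi⟩ := Set.mem_iUnion.1 (h hσ)
    exact Set.eq_empty_iff_forall_notMem.1 (hx i) u (Set.mem_iUnion₂.2 ⟨σ, hi, hc⟩)
end

section
/- (Equational Conclusion) Let k, m, n : ℕ, S : Fin m → Set (Fin k → Bool), Q : Fin n → Set (Fin k → Bool), and T : Set (Fin k → Bool). Suppose the premiss list is satisfiable: there exist a nonempty type U and an assignment x : Fin k → Set U with P_{S i}(x) = ∅ for all i and P_{Q j}(x) ≠ ∅ for all j. Then the argument with premises P_{S i}(x) = ∅ (all i) and P_{Q j}(x) ≠ ∅ (all j) and conclusion P_T(x) = ∅ is PSA-valid if and only if the purely equational argument with premises P_{S i}(x) = ∅ (all i) and conclusion P_T(x) = ∅ is PSA-valid. -/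
theorem mem_PSfun_iff {U : Type*} {k : ℕ} (S : Set (Fin k → Bool)) (x : Fin k → Set U) (u : U) :
    u ∈ PSfun S x ↔ ∃ σ ∈ S, ∀ i, (σ i = true ↔ u ∈ x i) := by
  simp only [PSfun, constituent, Set.mem_iUnion, Set.mem_iInter, exists_prop]
  refine exists_congr fun σ => and_congr_right fun _ => forall_congr' fun i => ?_
  cases h : σ i <;> simp

theorem PSfun_sum_empty {U V : Type} {k : ℕ} (S : Set (Fin k → Bool)) (x : Fin k → Set U)
    (y : Fin k → Set V) :
    PSfun S (fun i => {w : U ⊕ V | Sum.elim (fun u => u ∈ x i) (fun v => v ∈ y i) w}) = ∅ ↔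
      PSfun S x = ∅ ∧ PSfun S y = ∅ := by
  simp only [Set.eq_empty_iff_forall_notMem, Sum.forall, mem_PSfun_iff, Set.mem_setOf_eq,
    Sum.elim_inl, Sum.elim_inr]

theorem equational_conclusion (k m n : ℕ) (S : Fin m → Set (Fin k → Bool))
    (Q : Fin n → Set (Fin k → Bool)) (T : Set (Fin k → Bool))
    (hsat : ∃ (U : Type) (_ : Nonempty U) (x : Fin k → Set U),
      (∀ i, PSfun (S i) x = ∅) ∧ (∀ j, PSfun (Q j) x ≠ ∅)) :
    (∀ (U : Type), Nonempty U → ∀ x : Fin k → Set U,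
      (∀ i, PSfun (S i) x = ∅) → (∀ j, PSfun (Q j) x ≠ ∅) → PSfun T x = ∅) ↔
    (∀ (U : Type), Nonempty U → ∀ x : Fin k → Set U,
      (∀ i, PSfun (S i) x = ∅) → PSfun T x = ∅) := by
  obtain ⟨V, _, y, hS, hQ⟩ := hsat
  constructor
  · intro h U hU x hx
    have := h (U ⊕ V) inferInstance _
      (fun i => (PSfun_sum_empty (S i) x y).2 ⟨hx i, hS i⟩)
      (fun j hj => hQ j ((PSfun_sum_empty (Q j) x y).1 hj).2)
    exact ((PSfun_sum_empty T x y).1 this).1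
  · intro h U hU x hx _
    exact h U hU x hx
end

section
/- For any k : ℕ and any S, T, T_j : Set (Fin k → Bool), the argument with premises P_S(x) = ∅ and P_{T_j}(x) ≠ ∅ and conclusion P_T(x) ≠ ∅ is PSA-valid if and only if T_j ⊆ S ∪ T. -/
theorem mem_PSfun_aux {U : Type} {k : ℕ} (S : Set (Fin k → Bool)) (x : Fin k → Set U) (u : U)
    (σ : Fin k → Bool) (h : ∀ i, σ i = true ↔ u ∈ x i) : u ∈ PSfun S x ↔ σ ∈ S := by
  have key : ∀ τ, u ∈ constituent x τ ↔ τ = σ := by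
    intro τ
    simp only [constituent, Set.mem_iInter, funext_iff]
    refine forall_congr' fun i => ?_
    have := h i
    cases hτ : τ i <;> cases hσ : σ i <;> simp_all
  simp [PSfun, key]

theorem negated_conclusion_single (k : ℕ) (S T Tj : Set (Fin k → Bool)) :
    (∀ (U : Type), Nonempty U → ∀ x : Fin k → Set U,
      PSfun S x = ∅ → PSfun Tj x ≠ ∅ → PSfun T x ≠ ∅) ↔ Tj ⊆ S ∪ T := by
  constructor
  · intro h σ hσ
    by_contra hn
    have hm : ∀ R : Set (Fin k → Bool),
        () ∈ PSfun R (fun i => {_u : Unit | σ i = true}) ↔ σ ∈ R :=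
      fun R => mem_PSfun_aux R _ () σ (fun i => by simp)
    have he : ∀ R : Set (Fin k → Bool), σ ∉ R →
        PSfun R (fun i => {_u : Unit | σ i = true}) = ∅ :=
      fun R hR => Set.eq_empty_iff_forall_notMem.2 fun _ hu => hR ((hm R).1 hu)
    refine h Unit ⟨()⟩ _ (he S fun q => hn (Or.inl q)) ?_ (he T fun q => hn (Or.inr q))
    exact Set.Nonempty.ne_empty ⟨(), (hm Tj).2 hσ⟩
  · intro h U _ x hS hj hT
    obtain ⟨u, hu⟩ := Set.nonempty_iff_ne_empty.2 hj
    classical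
    have hm := fun R => mem_PSfun_aux R x u (fun i => decide (u ∈ x i)) (fun i => by simp)
    rcases h ((hm Tj).1 hu) with q | q
    · have := (hm S).2 q
      simp [hS] at this
    · have := (hm T).2 q
      simp [hT] at this
end

section
/- (Boole's V in valid arguments, single negative premiss) For any k : ℕ and any S, T₀, T : Set (Fin k → Bool), the following are equivalent: (i) for every nonempty type U and every assignment x : Fin k → Set U, if P_S(x) = ∅ and P_{T₀}(x) ≠ ∅ then P_T(x) ≠ ∅; (ii) for every nonempty type U, every assignment x : Fin k → Set U, and every set V : Set U, if P_S(x) = ∅ and V ∩ (P_{T₀}(x))ᶜ = ∅ then V ∩ (P_T(x))ᶜ = ∅. -/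
open Classical in
theorem mem_PSfun_iff_aux {U : Type} {k : ℕ} (S : Set (Fin k → Bool)) (x : Fin k → Set U) (u : U) :
    u ∈ PSfun S x ↔ (fun i => decide (u ∈ x i)) ∈ S := by
  have key : ∀ σ : Fin k → Bool, u ∈ constituent x σ ↔ σ = fun i => decide (u ∈ x i) := by
    intro σ
    simp only [constituent, Set.mem_iInter, funext_iff]
    refine forall_congr' fun i => ?_
    cases h : σ i <;> simp
  simp only [PSfun, Set.mem_iUnion, key]
  constructor
  · rintro ⟨σ, hσ, rfl⟩
    exact hσ
  · intro h
    exact ⟨_, h, rfl⟩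

theorem boole_V_single_negative_premiss (k : ℕ) (S T₀ T : Set (Fin k → Bool)) :
    (∀ (U : Type), Nonempty U → ∀ x : Fin k → Set U,
      PSfun S x = ∅ → PSfun T₀ x ≠ ∅ → PSfun T x ≠ ∅) ↔
    (∀ (U : Type), Nonempty U → ∀ (x : Fin k → Set U) (V : Set U),
      PSfun S x = ∅ → V ∩ (PSfun T₀ x)ᶜ = ∅ → V ∩ (PSfun T x)ᶜ = ∅) := by
  classical
  constructor
  · intro h U _ x V hS hV
    rw [Set.eq_empty_iff_forall_notMem] at hS hV ⊢
    rintro u ⟨huV, huT⟩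
    apply huT
    have hu0 : u ∈ PSfun T₀ x := by
      by_contra hc
      exact hV u ⟨huV, hc⟩
    have huS := hS u
    rw [mem_PSfun_iff_aux] at hu0 huS ⊢
    have e : ∀ (R : Set (Fin k → Bool)) (w : Unit),
        w ∈ PSfun R (fun i => {_w : Unit | u ∈ x i}) ↔ (fun i => decide (u ∈ x i)) ∈ R := by
      intro R w
      rw [mem_PSfun_iff_aux]
      simp only [Set.mem_setOf_eq]
    have := h Unit ⟨()⟩ (fun i => {_w : Unit | u ∈ x i})
      (Set.eq_empty_iff_forall_notMem.2 fun w hw => huS ((e S w).1 hw))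
      (Set.nonempty_iff_ne_empty.1 ⟨(), (e T₀ ()).2 hu0⟩)
    obtain ⟨w, hw⟩ := Set.nonempty_iff_ne_empty.2 this
    exact (e T w).1 hw
  · intro h U hU x hS h0 hT
    have := h U hU x (PSfun T₀ x) hS (Set.inter_compl_self _)
    rw [hT, Set.compl_empty, Set.inter_univ] at this
    exact h0 this
end

section
/- (Elimination and Solution Theorem) For any type U and any sets a, b, x : Set U, the equation (a ∩ x) ∪ (b ∩ xᶜ) = ∅ holds if and only if a ∩ b = ∅ and there exists z : Set U with x = (zᶜ ∩ b) ∪ (z ∩ aᶜ). -/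
theorem elimination_and_solution (U : Type*) (a b x : Set U) :
    (a ∩ x) ∪ (b ∩ xᶜ) = ∅ ↔
      a ∩ b = ∅ ∧ ∃ z : Set U, x = (zᶜ ∩ b) ∪ (z ∩ aᶜ) := by
  constructor
  · intro h
    have h' : ∀ u, ¬ ((u ∈ a ∧ u ∈ x) ∨ (u ∈ b ∧ u ∉ x)) := fun u hu => by
      have : u ∈ (a ∩ x) ∪ (b ∩ xᶜ) := hu
      rw [h] at this
      exact this
    refine ⟨?_, x, ?_⟩
    · ext u
      have := h' u
      simp only [Set.mem_inter_iff, Set.mem_empty_iff_false]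
      tauto
    · ext u
      have := h' u
      simp only [Set.mem_inter_iff, Set.mem_union, Set.mem_compl_iff]
      tauto
  · rintro ⟨h, z, rfl⟩
    have h' : ∀ u, ¬ (u ∈ a ∧ u ∈ b) := fun u hu => by
      have : u ∈ a ∩ b := hu
      rw [h] at this
      exact this
    ext u
    have := h' u
    simp only [Set.mem_inter_iff, Set.mem_union, Set.mem_compl_iff, Set.mem_empty_iff_false]
    tauto
end

section
/- (Eliminant, single variable) For any type U and any unary term function with constants f : Set U → Set U, there exists x : Set U with f(x) = ∅ if and only if f(Set.univ) ∩ f(∅) = ∅. -/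
/-- Unary term functions with constants on `U`. -/
inductive IsTermFun1 (U : Type*) : (Set U → Set U) → Prop
  | id : IsTermFun1 U (fun x => x)
  | const (A : Set U) : IsTermFun1 U (fun _ => A)
  | union {f g} : IsTermFun1 U f → IsTermFun1 U g → IsTermFun1 U (fun x => f x ∪ g x)
  | inter {f g} : IsTermFun1 U f → IsTermFun1 U g → IsTermFun1 U (fun x => f x ∩ g x)
  | compl {f} : IsTermFun1 U f → IsTermFun1 U (fun x => (f x)ᶜ)

theorem termFun1_key (U : Type*) (f : Set U → Set U) (hf : IsTermFun1 U f) (x : Set U) (u : U) :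
    (u ∈ x → (u ∈ f x ↔ u ∈ f Set.univ)) ∧ (u ∉ x → (u ∈ f x ↔ u ∈ f ∅)) := by
  induction hf with
  | id => simp +contextual
  | const A => simp
  | union _ _ h1 h2 => simp only [Set.mem_union]; tauto
  | inter _ _ h1 h2 => simp only [Set.mem_inter_iff]; tauto
  | compl _ h => simp only [Set.mem_compl_iff]; tauto

theorem eliminant_single_variable (U : Type*) (f : Set U → Set U)
    (hf : IsTermFun1 U f) :
    (∃ x : Set U, f x = ∅) ↔ f Set.univ ∩ f ∅ = ∅ := by
  constructor
  · rintro ⟨x, hx⟩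
    ext u
    have h := termFun1_key U f hf x u
    rw [hx] at h
    simp only [Set.mem_inter_iff, Set.mem_empty_iff_false] at h ⊢
    tauto
  · intro h
    refine ⟨f ∅, ?_⟩
    ext u
    have h1 := termFun1_key U f hf (f ∅) u
    have h2 : u ∉ f Set.univ ∩ f ∅ := by rw [h]; simp
    simp only [Set.mem_inter_iff, Set.mem_empty_iff_false] at h2 ⊢
    tauto
end

section
/- (Boole's Elimination Theorem) For any type U, any k : ℕ, and any k-ary term function with constants f on U, there exists an assignment x : Fin k → Set U with f(x) = ∅ if and only if ⋂ (σ : Fin k → Bool), f(σ*) = ∅. -/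
theorem isTermFun_local {U : Type*} {k : ℕ} {f : (Fin k → Set U) → Set U}
    (hf : IsTermFun U k f) (u : U) (x y : Fin k → Set U) (h : ∀ i, u ∈ x i ↔ u ∈ y i) :
    u ∈ f x ↔ u ∈ f y := by
  induction hf with
  | proj i => exact h i
  | const A => exact Iff.rfl
  | union _ _ h1 h2 => exact or_congr h1 h2
  | inter _ _ h1 h2 => exact and_congr h1 h2
  | compl _ h1 => exact not_congr h1

theorem mem_starAssign {U : Type*} {k : ℕ} (σ : Fin k → Bool) (i : Fin k) (u : U) :
    u ∈ (starAssign σ i : Set U) ↔ σ i = true := by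
  unfold starAssign
  split_ifs with h <;> simp [h]

theorem boole_elimination (U : Type*) (k : ℕ)
    (f : (Fin k → Set U) → Set U) (hf : IsTermFun U k f) :
    (∃ x : Fin k → Set U, f x = ∅) ↔ ⋂ σ : Fin k → Bool, f (starAssign σ) = ∅ := by
  classical
  constructor
  · rintro ⟨x, hx⟩
    rw [Set.eq_empty_iff_forall_notMem]
    intro u hu
    have h1 := Set.mem_iInter.1 hu (fun i => decide (u ∈ x i))
    rw [isTermFun_local hf u _ x (fun i => by rw [mem_starAssign]; simp), hx] at h1
    exact h1
  · intro h
    have h2 : ∀ u : U, ∃ σ : Fin k → Bool, u ∉ f (starAssign σ) := by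
      intro u
      by_contra hc
      push Not at hc
      have : u ∈ ⋂ σ : Fin k → Bool, f (starAssign σ) := Set.mem_iInter.2 hc
      rw [h] at this
      exact this
    choose s hs using h2
    refine ⟨fun i => {u | s u i = true}, ?_⟩
    rw [Set.eq_empty_iff_forall_notMem]
    intro u hu
    apply hs u
    rwa [isTermFun_local hf u _ (fun i => {u | s u i = true}) (fun i => by rw [mem_starAssign]; rfl)]
end

section
/- (Parametric solutions for systems of basic formulas) Let U be a type, n : ℕ, and let a, b : Set U, c, d : Fin n → Set U, and x : Set U. Then [(a ∩ x) ∪ (b ∩ xᶜ) = ∅ and for every i, (c i ∩ x) ∪ (d i ∩ xᶜ) ≠ ∅] holds if and only if there exist w : Set U and v : Fin n → Set U such that: a ∩ b = ∅; for every i, v i ≠ ∅ and v i ⊆ (c i ∩ aᶜ) ∪ (d i ∩ bᶜ); for all i ≠ j, v i ∩ v j ⊆ (c i ∪ d j) ∩ (c j ∪ d i); and x = (w ∩ (a ∪ ⋃ i, v i ∩ (c i)ᶜ)ᶜ) ∪ (wᶜ ∩ (b ∪ ⋃ i, v i ∩ (d i)ᶜ)). -/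
theorem parametric_solutions (U : Type*) (n : ℕ) (a b : Set U)
    (c d : Fin n → Set U) (x : Set U) :
    ((a ∩ x) ∪ (b ∩ xᶜ) = ∅ ∧ ∀ i, (c i ∩ x) ∪ (d i ∩ xᶜ) ≠ ∅) ↔
    (∃ (w : Set U) (v : Fin n → Set U),
      a ∩ b = ∅ ∧
      (∀ i, v i ≠ ∅ ∧ v i ⊆ (c i ∩ aᶜ) ∪ (d i ∩ bᶜ)) ∧
      (∀ i j, i ≠ j → v i ∩ v j ⊆ (c i ∪ d j) ∩ (c j ∪ d i)) ∧
      x = (w ∩ (a ∪ ⋃ i, v i ∩ (c i)ᶜ)ᶜ) ∪ (wᶜ ∩ (b ∪ ⋃ i, v i ∩ (d i)ᶜ))) := by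
  constructor
  · rintro ⟨h1, h2⟩
    have h1' : ∀ p, (p ∈ a → p ∉ x) ∧ (p ∈ b → p ∈ x) := by
      intro p
      have := Set.ext_iff.1 h1 p
      simp only [Set.mem_union, Set.mem_inter_iff, Set.mem_compl_iff, Set.mem_empty_iff_false] at this
      tauto
    refine ⟨x, fun i => (c i ∩ x) ∪ (d i ∩ xᶜ), ?_, fun i => ⟨h2 i, ?_⟩, ?_, ?_⟩
    · ext p
      have := h1' p
      simp only [Set.mem_inter_iff, Set.mem_empty_iff_false]
      tauto
    · intro p
      have := h1' p
      simp only [Set.mem_union, Set.mem_inter_iff, Set.mem_compl_iff]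
      tauto
    · intro i j _ p
      simp only [Set.mem_union, Set.mem_inter_iff, Set.mem_compl_iff]
      tauto
    · ext p
      have := h1' p
      simp only [Set.mem_union, Set.mem_inter_iff, Set.mem_compl_iff, Set.mem_iUnion]
      by_cases hx : p ∈ x
      · simp only [hx]
        simp
        tauto
      · simp only [hx]
        simp
        tauto
  · rintro ⟨w, v, hab, hv, hij, hx⟩
    have hab' : ∀ p, p ∈ a → p ∈ b → False := fun p h h' => by
      have : p ∈ a ∩ b := ⟨h, h'⟩
      simp [hab] at this
    have hv' : ∀ i p, p ∈ v i → (p ∈ c i ∧ p ∉ a) ∨ (p ∈ d i ∧ p ∉ b) :=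
      fun i p h => (hv i).2 h
    have hij' : ∀ i j p, p ∈ v i → p ∈ v j → i ≠ j →
        (p ∈ c i ∨ p ∈ d j) ∧ (p ∈ c j ∨ p ∈ d i) :=
      fun i j p h h' hn => hij i j hn ⟨h, h'⟩
    have hx' : ∀ p, p ∈ x ↔ (p ∈ w ∧ ¬ (p ∈ a ∨ ∃ i, p ∈ v i ∧ p ∉ c i)) ∨
        (p ∉ w ∧ (p ∈ b ∨ ∃ i, p ∈ v i ∧ p ∉ d i)) := by
      intro p
      rw [hx]
      simp only [Set.mem_union, Set.mem_inter_iff, Set.mem_compl_iff, Set.mem_iUnion]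
    clear hx hij hab
    constructor
    · rw [Set.eq_empty_iff_forall_notMem]
      rintro p (⟨h1, h2⟩ | ⟨h1, h2⟩)
      · have := hx' p
        grind
      · have h3 : p ∉ x := h2
        have := hx' p
        grind
    · intro i h
      obtain ⟨p, hp⟩ := Set.nonempty_iff_ne_empty.2 (hv i).1
      have hn : ¬ ((p ∈ c i ∧ p ∈ x) ∨ (p ∈ d i ∧ p ∉ x)) := fun hh => by
        have : p ∈ (c i ∩ x) ∪ (d i ∩ xᶜ) := hh
        simp [h] at this
      have h1 := hx' p
      have h2 := hv' i p hp
      have h3 := fun j => hij' i j p hp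
      clear hx' hv hv' hij' h
      grind
end

section
/- (Schröder's elimination for one equation and one negated equation) For any type U and any sets a, b, c, d : Set U, there exists x : Set U with (a ∩ x) ∪ (b ∩ xᶜ) = ∅ and (c ∩ x) ∪ (d ∩ xᶜ) ≠ ∅ if and only if a ∩ b = ∅ and (c ∩ aᶜ) ∪ (d ∩ bᶜ) ≠ ∅. -/
theorem schroeder_elimination_one_one (U : Type*) (a b c d : Set U) :
    (∃ x : Set U, (a ∩ x) ∪ (b ∩ xᶜ) = ∅ ∧ (c ∩ x) ∪ (d ∩ xᶜ) ≠ ∅) ↔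
    (a ∩ b = ∅ ∧ (c ∩ aᶜ) ∪ (d ∩ bᶜ) ≠ ∅) := by
  simp only [← Set.nonempty_iff_ne_empty, Set.eq_empty_iff_forall_notMem]
  constructor
  · rintro ⟨x, h, u, hu⟩
    simp only [Set.mem_union, Set.mem_inter_iff, Set.mem_compl_iff] at h hu
    refine ⟨fun v hv => ?_, u, ?_⟩
    · have := h v
      have h1 := hv.1
      have h2 := hv.2
      tauto
    · have := h u
      simp only [Set.mem_union, Set.mem_inter_iff, Set.mem_compl_iff]
      tauto
  · rintro ⟨h, u, hu | hu⟩
    · refine ⟨aᶜ, fun v hv => ?_, u, Or.inl hu⟩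
      have := h v
      simp only [Set.mem_union, Set.mem_inter_iff, Set.mem_compl_iff] at hv this
      tauto
    · refine ⟨b, fun v hv => ?_, u, Or.inr hu⟩
      have := h v
      simp only [Set.mem_union, Set.mem_inter_iff, Set.mem_compl_iff] at hv this
      tauto
end

section
/- (V-translation of elimination) For any type U and any sets a, b, c, d, V : Set U, there exists x : Set U with ((a ∩ x) ∪ (b ∩ xᶜ)) ∪ (V ∩ ((c ∩ x) ∪ (d ∩ xᶜ))ᶜ) = ∅ if and only if (a ∩ b) ∪ (V ∩ ((c ∩ aᶜ) ∪ (d ∩ bᶜ))ᶜ) = ∅. (This is the complete result of eliminating x from the V-translated system, and it splits into the equation a ∩ b = ∅ together with the V-equation V ∩ ((c ∩ aᶜ) ∪ (d ∩ bᶜ))ᶜ = ∅, matching Schröder's elimination result.) -/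
theorem V_translation_elimination (U : Type*) (a b c d V : Set U) :
    (∃ x : Set U,
      ((a ∩ x) ∪ (b ∩ xᶜ)) ∪ (V ∩ ((c ∩ x) ∪ (d ∩ xᶜ))ᶜ) = ∅) ↔
    (a ∩ b) ∪ (V ∩ ((c ∩ aᶜ) ∪ (d ∩ bᶜ))ᶜ) = ∅ := by
  simp only [Set.eq_empty_iff_forall_notMem, Set.mem_union, Set.mem_inter_iff, Set.mem_compl_iff]
  constructor
  · rintro ⟨x, hx⟩ u
    have := hx u
    tauto
  · intro h
    refine ⟨b ∪ (c ∩ aᶜ), fun u => ?_⟩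
    have := h u
    simp only [Set.mem_union, Set.mem_inter_iff, Set.mem_compl_iff]
    tauto
end
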